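/- Let $d \ge 1$ and $p \in (1,\infty)$. For each $\varepsilon \in (0,1)$ let $k_\varepsilon : \mathbb{R}^d \times \mathbb{R}^d \to [0,\infty)$ be measurable and let $u_\varepsilon : \mathbb{R}^d \to \mathbb{R}$ be measurable; let $u : \mathbb{R}^d \to \mathbb{R}$ be measurable. Assume $\sup_{\varepsilon \in (0,1)}\big(\mathcal{E}_{k_\varepsilon}(u_\varepsilon,u_\varepsilon) + \mathcal{E}_{k_\varepsilon}(u,u)\big) < \infty$. Then $\mathcal{E}_{k_\varepsilon}(u_\varepsilon - u,\, u_\varepsilon - u) \to 0$ as $\varepsilon \to 0^+$ if and only if $\mathcal{E}_{k_\varepsilon}(u_\varepsilon,\, u_\varepsilon - u) - \mathcal{E}_{k_\varepsilon}(u,\, u_\varepsilon - u) \to 0$ as $\varepsilon \to 0^+$. (Under the stated boundedness all these quantities are finite and well defined.) -/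

import Mathlib

open MeasureTheory Filter
open scoped ENNReal Topology

/-- The nonlocal form `𝓔_k(u,v)` over `ℝ^d × ℝ^d` (product Lebesgue measure). -/
noncomputable def nlForm (d : ℕ) (p : ℝ)
    (k : EuclideanSpace ℝ (Fin d) → EuclideanSpace ℝ (Fin d) → ℝ)
    (u v : EuclideanSpace ℝ (Fin d) → ℝ) : ℝ :=
  ∫ z : EuclideanSpace ℝ (Fin d) × EuclideanSpace ℝ (Fin d),
    |u z.1 - u z.2| ^ (p - 2) * (u z.1 - u z.2) * (v z.1 - v z.2) * k z.1 z.2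

/-- The energy `𝓔_k(u,u) = ∫∫ |u(x)-u(y)|^p k(x,y) dy dx ∈ [0,∞]`. -/
noncomputable def nlEnergy (d : ℕ) (p : ℝ)
    (k : EuclideanSpace ℝ (Fin d) → EuclideanSpace ℝ (Fin d) → ℝ)
    (u : EuclideanSpace ℝ (Fin d) → ℝ) : ℝ≥0∞ :=
  ∫⁻ z : EuclideanSpace ℝ (Fin d) × EuclideanSpace ℝ (Fin d),
    ENNReal.ofReal (|u z.1 - u z.2| ^ p * k z.1 z.2)

/-!
Write `J t = |t| ^ (p - 2) * t`. With `a` and `b` the increments of `u_ε` and `u`, the two forms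
integrate `|a - b| ^ p` and `(J a - J b) * (a - b)` against `k_ε`. Both integrands are continuous,
nonnegative and positively homogeneous of degree `p` in `(a, b)`, and they vanish on the same set,
the diagonal, because `J` is strictly increasing. By compactness of the unit sphere, such a
function `f` is bounded by `δ * ‖(a, b)‖ ^ p + C_δ * g`, where `g` is the other one; integrating,
the energy bound makes the first term small uniformly in `ε`.
-/

/-- Positive homogeneity of degree `p`. Allowing `s = 0` forces `f 0 = 0` when `p ≠ 0`. -/
def IsPosHomogeneous {E : Type*} [SMul ℝ E] (p : ℝ) (f : E → ℝ) : Prop :=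
  ∀ s : ℝ, 0 ≤ s → ∀ x, f (s • x) = s ^ p * f x

section Homogeneous

lemma exists_forall_mem_le_add_mul_of_isCompact {X : Type*} [TopologicalSpace X] {K : Set X}
    (hK : IsCompact K) {f g : X → ℝ} (hf : Continuous f) (hg : Continuous g)
    (hg0 : ∀ x ∈ K, 0 ≤ g x) (hfg : ∀ x ∈ K, g x = 0 → f x ≤ 0) {δ : ℝ} (hδ : 0 < δ) :
    ∃ C, ∀ x ∈ K, f x ≤ δ + C * g x := by
  let S : Set X := K ∩ {x | δ ≤ f x}
  have hS : IsCompact S := hK.inter_right (isClosed_le continuous_const hf)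
  have hgpos : ∀ x ∈ S, 0 < g x := fun x hx =>
    (hg0 x hx.1).lt_of_ne' fun h => (hδ.trans_le hx.2).not_ge (hfg x hx.1 h)
  obtain ⟨C, hC⟩ := hS.bddAbove_image
    (hf.continuousOn.div hg.continuousOn fun x hx => (hgpos x hx).ne')
  refine ⟨max C 0, fun x hx => ?_⟩
  rcases le_total δ (f x) with hxδ | hxδ
  · have hratio : f x / g x ≤ max C 0 :=
      (hC (Set.mem_image_of_mem _ ⟨hx, hxδ⟩)).trans (le_max_left _ _)
    linarith [(div_le_iff₀ (hgpos x ⟨hx, hxδ⟩)).1 hratio]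
  · linarith [mul_nonneg (le_max_right C 0) (hg0 x hx)]

variable {E : Type*} [NormedAddCommGroup E] [NormedSpace ℝ E] {p : ℝ} {f g : E → ℝ}

lemma isPosHomogeneous_norm_rpow : IsPosHomogeneous p fun x : E => ‖x‖ ^ p := fun s hs x => by
  simp only [norm_smul, Real.norm_of_nonneg hs, Real.mul_rpow hs (norm_nonneg x)]

namespace IsPosHomogeneous

protected lemma map_zero (hf : IsPosHomogeneous p f) (hp : p ≠ 0) : f 0 = 0 := by
  simpa [Real.zero_rpow hp] using hf 0 le_rfl 0

protected lemma abs (hf : IsPosHomogeneous p f) : IsPosHomogeneous p fun x => |f x| :=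
  fun s hs x => by
    simp only [hf s hs, abs_mul, abs_of_nonneg (Real.rpow_nonneg hs p)]

lemma eq_norm_rpow_mul (hf : IsPosHomogeneous p f) {x : E} (hx : x ≠ 0) :
    f x = ‖x‖ ^ p * f (‖x‖⁻¹ • x) := by
  rw [← hf _ (norm_nonneg x), smul_inv_smul₀ (norm_ne_zero_iff.2 hx)]

variable [ProperSpace E]

lemma exists_le_add_mul (hf : IsPosHomogeneous p f) (hg : IsPosHomogeneous p g) (hp : p ≠ 0)
    (hfc : Continuous f) (hgc : Continuous g) (hg0 : ∀ x, 0 ≤ g x)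
    (hfg : ∀ x, g x = 0 → f x ≤ 0) {δ : ℝ} (hδ : 0 < δ) :
    ∃ C, ∀ x, f x ≤ δ * ‖x‖ ^ p + C * g x := by
  obtain ⟨C, hC⟩ := exists_forall_mem_le_add_mul_of_isCompact (isCompact_sphere (0 : E) 1)
    hfc hgc (fun x _ => hg0 x) (fun x _ => hfg x) hδ
  refine ⟨C, fun x => ?_⟩
  rcases eq_or_ne x 0 with rfl | hx
  · simp [hf.map_zero hp, hg.map_zero hp, Real.zero_rpow hp]
  · have hunit : ‖x‖⁻¹ • x ∈ Metric.sphere (0 : E) 1 := by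
      simp [norm_smul, norm_ne_zero_iff.2 hx]
    calc f x = ‖x‖ ^ p * f (‖x‖⁻¹ • x) := hf.eq_norm_rpow_mul hx
      _ ≤ ‖x‖ ^ p * (δ + C * g (‖x‖⁻¹ • x)) := by gcongr; exact hC _ hunit
      _ = δ * ‖x‖ ^ p + C * g x := by rw [hg.eq_norm_rpow_mul hx]; ring

lemma exists_abs_le_mul_norm_rpow (hf : IsPosHomogeneous p f) (hp : 0 < p)
    (hfc : Continuous f) : ∃ C, ∀ x, |f x| ≤ C * ‖x‖ ^ p := by
  have hzero : ∀ x : E, ‖x‖ ^ p = 0 → |f x| ≤ 0 := fun x hx => by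
    rw [Real.rpow_eq_zero (norm_nonneg x) hp.ne', norm_eq_zero] at hx
    rw [hx, hf.map_zero hp.ne', abs_zero]
  obtain ⟨C, hC⟩ := hf.abs.exists_le_add_mul isPosHomogeneous_norm_rpow hp.ne' hfc.abs
    (continuous_norm.rpow_const fun _ => Or.inr hp.le) (fun x => by positivity) hzero one_pos
  exact ⟨1 + C, fun x => (hC x).trans_eq (by ring)⟩

end IsPosHomogeneous

end Homogeneous

section Integration

variable {Ω : Type*} [MeasurableSpace Ω]

lemma integrable_norm_rpow_of_memLp_ofReal {E : Type*} [NormedAddCommGroup E] {p : ℝ}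
    {ν : Measure Ω} {w : Ω → E} (hw : MemLp w (ENNReal.ofReal p) ν) (hp : 0 < p) :
    Integrable (fun z => ‖w z‖ ^ p) ν := by
  simpa only [ENNReal.toReal_ofReal hp.le] using
    hw.integrable_norm_rpow (ENNReal.ofReal_pos.2 hp).ne' ENNReal.ofReal_ne_top

section Product

variable {F G : Type*} [NormedAddCommGroup F] [NormedAddCommGroup G] {p : ℝ}

lemma norm_prod_rpow_le_add (x : F × G) : ‖x‖ ^ p ≤ ‖x.1‖ ^ p + ‖x.2‖ ^ p := by
  have hfst : 0 ≤ ‖x.1‖ ^ p := by positivity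
  have hsnd : 0 ≤ ‖x.2‖ ^ p := by positivity
  rw [Prod.norm_def]
  rcases max_choice ‖x.1‖ ‖x.2‖ with h | h <;> rw [h] <;> linarith

lemma integral_norm_prodMk_rpow_le {ν : Measure Ω} {a : Ω → F} {b : Ω → G} (hp : 0 < p)
    (ha : MemLp a (ENNReal.ofReal p) ν) (hb : MemLp b (ENNReal.ofReal p) ν) :
    ∫ z, ‖(a z, b z)‖ ^ p ∂ν ≤ ∫ z, ‖a z‖ ^ p ∂ν + ∫ z, ‖b z‖ ^ p ∂ν := by
  have hab : MemLp (fun z => (a z, b z)) (ENNReal.ofReal p) ν := .of_fst_snd ⟨ha, hb⟩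
  have hna := integrable_norm_rpow_of_memLp_ofReal ha hp
  have hnb := integrable_norm_rpow_of_memLp_ofReal hb hp
  rw [← integral_add hna hnb]
  exact integral_mono (integrable_norm_rpow_of_memLp_ofReal hab hp) (hna.add hnb)
    fun z => norm_prod_rpow_le_add (a z, b z)

end Product

lemma tendsto_zero_of_forall_eventually_le_mul_add {ι : Type*} {l : Filter ι} {A B : ι → ℝ}
    {M : ℝ} (hB : ∀ᶠ i in l, 0 ≤ B i)
    (hBA : ∀ δ > 0, ∃ C, ∀ᶠ i in l, B i ≤ δ * M + C * A i) (hA : Tendsto A l (𝓝 0)) :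
    Tendsto B l (𝓝 0) := by
  refine tendsto_order.2 ⟨fun a ha => hB.mono fun i => ha.trans_le, fun a ha => ?_⟩
  obtain ⟨δ, hδ, hδM⟩ := exists_pos_mul_lt ha M
  obtain ⟨C, hC⟩ := hBA δ hδ
  have hlim : Tendsto (fun i => δ * M + C * A i) l (𝓝 (M * δ)) := by
    simpa [mul_comm M] using (hA.const_mul C).const_add (δ * M)
  filter_upwards [hC, hlim.eventually_lt_const hδM] with i hi hlt using hi.trans_lt hlt

variable {E : Type*} [NormedAddCommGroup E] [NormedSpace ℝ E] [ProperSpace E] {p : ℝ}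
  {f g : E → ℝ}

namespace IsPosHomogeneous

lemma integrable_comp (hf : IsPosHomogeneous p f) (hp : 0 < p) (hfc : Continuous f)
    {ν : Measure Ω} {w : Ω → E} (hw : MemLp w (ENNReal.ofReal p) ν) :
    Integrable (fun z => f (w z)) ν := by
  obtain ⟨C, hC⟩ := hf.exists_abs_le_mul_norm_rpow hp hfc
  exact ((integrable_norm_rpow_of_memLp_ofReal hw hp).const_mul C).mono'
    (hfc.comp_aestronglyMeasurable hw.1) (.of_forall fun z => hC (w z))

lemma tendsto_integral_comp_zero (hf : IsPosHomogeneous p f) (hg : IsPosHomogeneous p g)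
    (hp : 0 < p) (hfc : Continuous f) (hgc : Continuous g) (hf0 : ∀ x, 0 ≤ f x)
    (hg0 : ∀ x, 0 ≤ g x) (hfg : ∀ x, g x = 0 → f x = 0)
    {ι : Type*} {l : Filter ι} {ν : ι → Measure Ω} {w : ι → Ω → E} {M : ℝ}
    (hw : ∀ᶠ i in l, MemLp (w i) (ENNReal.ofReal p) (ν i))
    (hM : ∀ᶠ i in l, ∫ z, ‖w i z‖ ^ p ∂ν i ≤ M)
    (hlim : Tendsto (fun i => ∫ z, g (w i z) ∂ν i) l (𝓝 0)) :
    Tendsto (fun i => ∫ z, f (w i z) ∂ν i) l (𝓝 0) := by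
  refine tendsto_zero_of_forall_eventually_le_mul_add (M := M)
    (.of_forall fun i => integral_nonneg fun z => hf0 _) (fun δ hδ => ?_) hlim
  obtain ⟨C, hC⟩ := hf.exists_le_add_mul hg hp.ne' hfc hgc hg0 (fun x hx => (hfg x hx).le) hδ
  refine ⟨C, ?_⟩
  filter_upwards [hw, hM] with i hwi hMi
  have hnorm : Integrable (fun z => δ * ‖w i z‖ ^ p) (ν i) :=
    (integrable_norm_rpow_of_memLp_ofReal hwi hp).const_mul δ
  have hgw : Integrable (fun z => C * g (w i z)) (ν i) :=
    (hg.integrable_comp hp hgc hwi).const_mul C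
  calc ∫ z, f (w i z) ∂ν i
      ≤ ∫ z, (δ * ‖w i z‖ ^ p + C * g (w i z)) ∂ν i :=
        integral_mono (hf.integrable_comp hp hfc hwi) (hnorm.add hgw) fun z => hC (w i z)
    _ = δ * ∫ z, ‖w i z‖ ^ p ∂ν i + C * ∫ z, g (w i z) ∂ν i := by
        rw [integral_add hnorm hgw, integral_const_mul, integral_const_mul]
    _ ≤ δ * M + C * ∫ z, g (w i z) ∂ν i := by gcongr

end IsPosHomogeneous

end Integration

section DualityMap

/-- The duality map `t ↦ |t| ^ (p - 2) * t` of the power `p`, i.e. the derivative of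
`|t| ^ p / p`. The last factor makes the value at `0` equal to `0` also for `p < 2`. -/
noncomputable def dualityMap (p t : ℝ) : ℝ := |t| ^ (p - 2) * t

variable {p : ℝ}

lemma dualityMap_neg (t : ℝ) : dualityMap p (-t) = -dualityMap p t := by
  simp [dualityMap]

lemma dualityMap_of_nonneg (hp : 1 < p) {t : ℝ} (ht : 0 ≤ t) :
    dualityMap p t = t ^ (p - 1) := by
  rw [dualityMap, abs_of_nonneg ht, ← Real.rpow_add_one' ht (by linarith)]
  ring_nf

lemma dualityMap_mul_self (hp : p ≠ 0) (t : ℝ) : dualityMap p t * t = |t| ^ p := by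
  rw [dualityMap, mul_assoc, ← abs_mul_abs_self t, ← mul_assoc]
  rcases eq_or_ne t 0 with rfl | ht
  · simp [Real.zero_rpow hp]
  · rw [← Real.rpow_add_one (abs_ne_zero.2 ht), ← Real.rpow_add_one (abs_ne_zero.2 ht)]
    ring_nf

lemma dualityMap_mul_mul_of_nonneg (hp : p ≠ 0) {s : ℝ} (hs : 0 ≤ s) (t r : ℝ) :
    dualityMap p (s * t) * (s * r) = s ^ p * (dualityMap p t * r) := by
  have hsp : dualityMap p s * s = s ^ p := by rw [dualityMap_mul_self hp, abs_of_nonneg hs]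
  have hmul : dualityMap p (s * t) = dualityMap p s * dualityMap p t := by
    simp only [dualityMap, abs_mul, Real.mul_rpow (abs_nonneg s) (abs_nonneg t)]
    ring
  rw [hmul, ← hsp]
  ring

lemma continuous_dualityMap (hp : 1 < p) : Continuous (dualityMap p) := by
  have hderiv : dualityMap p = fun t => p⁻¹ * deriv (fun x : ℝ => ‖x‖ ^ p) t := by
    funext t
    rw [(hasDerivAt_norm_rpow t hp).deriv, dualityMap, Real.norm_eq_abs]
    field_simp
  rw [hderiv]
  exact ((contDiff_norm_rpow hp).continuous_deriv le_rfl).const_mul p⁻¹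

lemma strictMono_dualityMap (hp : 1 < p) : StrictMono (dualityMap p) := by
  refine strictMono_of_odd_strictMonoOn_nonneg dualityMap_neg ?_
  exact (Real.strictMonoOn_rpow_Ici_of_exponent_pos (sub_pos.2 hp)).congr
    fun t ht => (dualityMap_of_nonneg hp ht).symm

/-- The integrand `(J a - J b) * (a - b)`, `J = dualityMap p`, which measures the strict
monotonicity of `J` between `a = x.1` and `b = x.2`. -/
noncomputable def monotonicityGap (p : ℝ) (x : ℝ × ℝ) : ℝ :=
  (dualityMap p x.1 - dualityMap p x.2) * (x.1 - x.2)

lemma monotonicityGap_nonneg (hp : 1 < p) (x : ℝ × ℝ) : 0 ≤ monotonicityGap p x :=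
  ((strictMono_dualityMap hp).monotone.monovary monotone_id).sub_mul_sub_nonneg x.2 x.1

lemma monotonicityGap_eq_zero_iff (hp : 1 < p) {x : ℝ × ℝ} :
    monotonicityGap p x = 0 ↔ x.1 = x.2 := by
  simp only [monotonicityGap, mul_eq_zero, sub_eq_zero, (strictMono_dualityMap hp).injective.eq_iff,
    or_self]

lemma continuous_monotonicityGap (hp : 1 < p) : Continuous (monotonicityGap p) := by
  have := continuous_dualityMap hp
  unfold monotonicityGap
  fun_prop

lemma isPosHomogeneous_dualityMap_mul (hp : p ≠ 0) :
    IsPosHomogeneous p fun x : ℝ × ℝ => dualityMap p x.1 * x.2 := fun _ hs _ =>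
  dualityMap_mul_mul_of_nonneg hp hs _ _

lemma isPosHomogeneous_monotonicityGap (hp : p ≠ 0) :
    IsPosHomogeneous p (monotonicityGap p) := fun s hs x => by
  simp only [monotonicityGap, Prod.smul_fst, Prod.smul_snd, smul_eq_mul, ← mul_sub, sub_mul,
    dualityMap_mul_mul_of_nonneg hp hs]

lemma isPosHomogeneous_abs_sub_rpow :
    IsPosHomogeneous p fun x : ℝ × ℝ => |x.1 - x.2| ^ p := fun s hs x => by
  simpa only [Prod.smul_fst, Prod.smul_snd, ← smul_sub, Real.norm_eq_abs] using
    isPosHomogeneous_norm_rpow (E := ℝ) s hs (x.1 - x.2)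

variable {Ω : Type*} [MeasurableSpace Ω]

lemma integrable_dualityMap_mul (hp : 1 < p) {ν : Measure Ω} {a b : Ω → ℝ}
    (ha : MemLp a (ENNReal.ofReal p) ν) (hb : MemLp b (ENNReal.ofReal p) ν) :
    Integrable (fun z => dualityMap p (a z) * b z) ν := by
  have hp0 : 0 < p := one_pos.trans hp
  exact (isPosHomogeneous_dualityMap_mul hp0.ne').integrable_comp hp0
    (((continuous_dualityMap hp).comp continuous_fst).mul continuous_snd)
    (MemLp.of_fst_snd (f := fun z => (a z, b z)) ⟨ha, hb⟩)

lemma tendsto_integral_abs_sub_rpow_iff (hp : 1 < p) {ι : Type*} {l : Filter ι}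
    {ν : ι → Measure Ω} {a b : ι → Ω → ℝ} {M : ℝ}
    (ha : ∀ᶠ i in l, MemLp (a i) (ENNReal.ofReal p) (ν i))
    (hb : ∀ᶠ i in l, MemLp (b i) (ENNReal.ofReal p) (ν i))
    (hM : ∀ᶠ i in l, ∫ z, |a i z| ^ p ∂ν i + ∫ z, |b i z| ^ p ∂ν i ≤ M) :
    Tendsto (fun i => ∫ z, |a i z - b i z| ^ p ∂ν i) l (𝓝 0) ↔
      Tendsto (fun i => ∫ z, monotonicityGap p (a i z, b i z) ∂ν i) l (𝓝 0) := by
  have hp0 : 0 < p := one_pos.trans hp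
  let w (i : ι) (z : Ω) : ℝ × ℝ := (a i z, b i z)
  have hw : ∀ᶠ i in l, MemLp (w i) (ENNReal.ofReal p) (ν i) := by
    filter_upwards [ha, hb] with i hai hbi using MemLp.of_fst_snd ⟨hai, hbi⟩
  have hnorm : ∀ᶠ i in l, ∫ z, ‖w i z‖ ^ p ∂ν i ≤ M := by
    filter_upwards [ha, hb, hM] with i hai hbi hMi using
      (integral_norm_prodMk_rpow_le hp0 hai hbi).trans hMi
  have hcont : Continuous fun x : ℝ × ℝ => |x.1 - x.2| ^ p :=
    (continuous_fst.sub continuous_snd).abs.rpow_const fun _ => Or.inr hp0.le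
  have hzero (x : ℝ × ℝ) : |x.1 - x.2| ^ p = 0 ↔ monotonicityGap p x = 0 := by
    rw [monotonicityGap_eq_zero_iff hp, Real.rpow_eq_zero (abs_nonneg _) hp0.ne', abs_eq_zero,
      sub_eq_zero]
  have hhom := isPosHomogeneous_monotonicityGap hp0.ne'
  have hgap := continuous_monotonicityGap hp
  exact ⟨hhom.tendsto_integral_comp_zero (w := w) isPosHomogeneous_abs_sub_rpow hp0 hgap hcont
      (monotonicityGap_nonneg hp) (fun x => by positivity) (fun x => (hzero x).1) hw hnorm,
    isPosHomogeneous_abs_sub_rpow.tendsto_integral_comp_zero (w := w) hhom hp0 hcont hgap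
      (fun x => by positivity) (monotonicityGap_nonneg hp) (fun x => (hzero x).2) hw hnorm⟩

end DualityMap

section NonlocalForm

variable {α : Type*}

/-- The increment `u(x) - u(y)` as a function of the pair `(x, y)`. -/
noncomputable def increment (u : α → ℝ) (z : α × α) : ℝ := u z.1 - u z.2

lemma increment_sub (u v : α → ℝ) : increment (u - v) = increment u - increment v := by
  funext z
  simp only [increment, Pi.sub_apply]
  ring

variable [MeasurableSpace α] {μ : Measure (α × α)} {p : ℝ} {k : α → α → ℝ} {u v : α → ℝ}

/-- The nonlocal form `𝓔_k(u, v)` over an arbitrary measure `μ` on `α × α`; `nlForm` is the case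
of Lebesgue measure. -/
noncomputable def nonlocalForm (μ : Measure (α × α)) (p : ℝ) (k : α → α → ℝ) (u v : α → ℝ) : ℝ :=
  ∫ z, |u z.1 - u z.2| ^ (p - 2) * (u z.1 - u z.2) * (v z.1 - v z.2) * k z.1 z.2 ∂μ

/-- The energy `𝓔_k(u, u) ∈ [0, ∞]` over an arbitrary measure `μ` on `α × α`; `nlEnergy` is the
case of Lebesgue measure. -/
noncomputable def nonlocalEnergy (μ : Measure (α × α)) (p : ℝ) (k : α → α → ℝ) (u : α → ℝ) :
    ℝ≥0∞ :=
  ∫⁻ z, ENNReal.ofReal (|u z.1 - u z.2| ^ p * k z.1 z.2) ∂μ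

/-- The measure `k(x, y) dμ(x, y)`, which turns finiteness of the energy of `u` into membership of
`increment u` in `L^p`. -/
noncomputable def kernelMeasure (μ : Measure (α × α)) (k : α → α → ℝ) : Measure (α × α) :=
  μ.withDensity fun z => ENNReal.ofReal (k z.1 z.2)

lemma measurable_increment (hu : Measurable u) : Measurable (increment u) :=
  (hu.comp measurable_fst).sub (hu.comp measurable_snd)

lemma nonlocalForm_eq_integral_kernelMeasure (hk : Measurable fun z : α × α => k z.1 z.2)
    (hk0 : ∀ x y, 0 ≤ k x y) (u v : α → ℝ) :
    nonlocalForm μ p k u v =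
      ∫ z, dualityMap p (increment u z) * increment v z ∂kernelMeasure μ k := by
  rw [kernelMeasure, integral_withDensity_eq_integral_toReal_smul hk.ennreal_ofReal
    (.of_forall fun _ => ENNReal.ofReal_lt_top)]
  refine integral_congr_ae (.of_forall fun z => ?_)
  simp only [ENNReal.toReal_ofReal (hk0 _ _), smul_eq_mul, dualityMap, increment]
  ring

lemma nonlocalEnergy_eq_lintegral_kernelMeasure (hk : Measurable fun z : α × α => k z.1 z.2)
    (hu : Measurable u) :
    nonlocalEnergy μ p k u = ∫⁻ z, ENNReal.ofReal (|increment u z| ^ p) ∂kernelMeasure μ k := by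
  have hmeas := ((measurable_increment hu).abs.pow_const p).ennreal_ofReal
  rw [kernelMeasure, lintegral_withDensity_eq_lintegral_mul μ hk.ennreal_ofReal hmeas]
  refine lintegral_congr fun z => ?_
  have hpow : 0 ≤ |increment u z| ^ p := by positivity
  rw [Pi.mul_apply, mul_comm (ENNReal.ofReal _), ← ENNReal.ofReal_mul hpow, increment]

lemma integral_abs_increment_rpow (hk : Measurable fun z : α × α => k z.1 z.2)
    (hu : Measurable u) :
    ∫ z, |increment u z| ^ p ∂kernelMeasure μ k = (nonlocalEnergy μ p k u).toReal := by
  rw [nonlocalEnergy_eq_lintegral_kernelMeasure hk hu]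
  exact integral_eq_lintegral_of_nonneg_ae (.of_forall fun z => by positivity)
    ((measurable_increment hu).abs.pow_const p).aestronglyMeasurable

lemma memLp_increment (hp : 0 < p) (hk : Measurable fun z : α × α => k z.1 z.2)
    (hu : Measurable u) (hfin : nonlocalEnergy μ p k u ≠ ⊤) :
    MemLp (increment u) (ENNReal.ofReal p) (kernelMeasure μ k) := by
  have hmeas := measurable_increment hu
  rw [← integrable_norm_rpow_iff hmeas.aestronglyMeasurable (ENNReal.ofReal_pos.2 hp).ne'
    ENNReal.ofReal_ne_top, ENNReal.toReal_ofReal hp.le]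
  refine ⟨(hmeas.norm.pow_const p).aestronglyMeasurable, ?_⟩
  rw [hasFiniteIntegral_iff_ofReal (.of_forall fun z => by positivity)]
  rw [nonlocalEnergy_eq_lintegral_kernelMeasure hk hu] at hfin
  exact hfin.lt_top

lemma nonlocalForm_sub_self (hp : p ≠ 0) (hk : Measurable fun z : α × α => k z.1 z.2)
    (hk0 : ∀ x y, 0 ≤ k x y) :
    nonlocalForm μ p k (u - v) (u - v) =
      ∫ z, |increment u z - increment v z| ^ p ∂kernelMeasure μ k := by
  simp only [nonlocalForm_eq_integral_kernelMeasure hk hk0, increment_sub, Pi.sub_apply,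
    dualityMap_mul_self hp]

lemma nonlocalForm_sub_nonlocalForm (hp : 1 < p) (hk : Measurable fun z : α × α => k z.1 z.2)
    (hk0 : ∀ x y, 0 ≤ k x y)
    (hu : MemLp (increment u) (ENNReal.ofReal p) (kernelMeasure μ k))
    (hv : MemLp (increment v) (ENNReal.ofReal p) (kernelMeasure μ k)) :
    nonlocalForm μ p k u (u - v) - nonlocalForm μ p k v (u - v) =
      ∫ z, monotonicityGap p (increment u z, increment v z) ∂kernelMeasure μ k := by
  rw [nonlocalForm_eq_integral_kernelMeasure hk hk0, nonlocalForm_eq_integral_kernelMeasure hk hk0,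
    increment_sub, ← integral_sub (integrable_dualityMap_mul hp hu (hu.sub hv))
      (integrable_dualityMap_mul hp hv (hu.sub hv))]
  simp only [monotonicityGap, sub_mul, Pi.sub_apply]

end NonlocalForm

theorem stmt_10_general {ι α : Type*} [MeasurableSpace α] {μ : Measure (α × α)} {l : Filter ι}
    {p : ℝ} (hp : 1 < p) {k : ι → α → α → ℝ} {u v : ι → α → ℝ}
    (hk : ∀ᶠ i in l, Measurable fun z : α × α => k i z.1 z.2)
    (hk0 : ∀ᶠ i in l, ∀ x y, 0 ≤ k i x y)
    (hu : ∀ᶠ i in l, Measurable (u i)) (hv : ∀ᶠ i in l, Measurable (v i))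
    (hbdd : ∃ C : ℝ≥0∞, C ≠ ⊤ ∧ ∀ᶠ i in l,
      nonlocalEnergy μ p (k i) (u i) + nonlocalEnergy μ p (k i) (v i) ≤ C) :
    Tendsto (fun i => nonlocalForm μ p (k i) (u i - v i) (u i - v i)) l (𝓝 0) ↔
      Tendsto (fun i => nonlocalForm μ p (k i) (u i) (u i - v i) -
        nonlocalForm μ p (k i) (v i) (u i - v i)) l (𝓝 0) := by
  have hp0 : 0 < p := one_pos.trans hp
  obtain ⟨C, hC, hbdd⟩ := hbdd
  have hfin := hbdd.mono fun i hi => ENNReal.add_ne_top.1 (ne_top_of_le_ne_top hC hi)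
  have hLu : ∀ᶠ i in l,
      MemLp (increment (u i)) (ENNReal.ofReal p) (kernelMeasure μ (k i)) := by
    filter_upwards [hk, hu, hfin] with i hki hui hi using memLp_increment hp0 hki hui hi.1
  have hLv : ∀ᶠ i in l,
      MemLp (increment (v i)) (ENNReal.ofReal p) (kernelMeasure μ (k i)) := by
    filter_upwards [hk, hv, hfin] with i hki hvi hi using memLp_increment hp0 hki hvi hi.2
  have hM : ∀ᶠ i in l, ∫ z, |increment (u i) z| ^ p ∂kernelMeasure μ (k i) +
      ∫ z, |increment (v i) z| ^ p ∂kernelMeasure μ (k i) ≤ C.toReal := by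
    filter_upwards [hk, hu, hv, hfin, hbdd] with i hki hui hvi hi hCi
    rw [integral_abs_increment_rpow hki hui, integral_abs_increment_rpow hki hvi,
      ← ENNReal.toReal_add hi.1 hi.2]
    exact ENNReal.toReal_mono hC hCi
  have hself : ∀ᶠ i in l, nonlocalForm μ p (k i) (u i - v i) (u i - v i) =
      ∫ z, |increment (u i) z - increment (v i) z| ^ p ∂kernelMeasure μ (k i) := by
    filter_upwards [hk, hk0] with i hki hki0 using nonlocalForm_sub_self hp0.ne' hki hki0
  have hdiff : ∀ᶠ i in l,
      nonlocalForm μ p (k i) (u i) (u i - v i) - nonlocalForm μ p (k i) (v i) (u i - v i) =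
        ∫ z, monotonicityGap p (increment (u i) z, increment (v i) z) ∂kernelMeasure μ (k i) := by
    filter_upwards [hk, hk0, hLu, hLv] with i hki hki0 hui hvi using
      nonlocalForm_sub_nonlocalForm hp hki hki0 hui hvi
  rw [tendsto_congr' hself, tendsto_congr' hdiff]
  exact tendsto_integral_abs_sub_rpow_iff hp hLu hLv hM

/-- Under the uniform energy bound
`sup_{ε∈(0,1)} (𝓔_{k_ε}(u_ε,u_ε) + 𝓔_{k_ε}(u,u)) < ∞`, one has
`𝓔_{k_ε}(u_ε-u, u_ε-u) → 0` as `ε → 0⁺` iff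
`𝓔_{k_ε}(u_ε, u_ε-u) - 𝓔_{k_ε}(u, u_ε-u) → 0` as `ε → 0⁺`. -/
theorem stmt_10 (d : ℕ) (hd : 1 ≤ d) (p : ℝ) (hp : 1 < p)
    (k : ℝ → EuclideanSpace ℝ (Fin d) → EuclideanSpace ℝ (Fin d) → ℝ)
    (hk : ∀ ε ∈ Set.Ioo (0 : ℝ) 1,
      Measurable fun z : EuclideanSpace ℝ (Fin d) × EuclideanSpace ℝ (Fin d) => k ε z.1 z.2)
    (hk0 : ∀ ε ∈ Set.Ioo (0 : ℝ) 1, ∀ x y, 0 ≤ k ε x y)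
    (uf : ℝ → EuclideanSpace ℝ (Fin d) → ℝ)
    (huf : ∀ ε ∈ Set.Ioo (0 : ℝ) 1, Measurable (uf ε))
    (u : EuclideanSpace ℝ (Fin d) → ℝ) (hu : Measurable u)
    (hbdd : ∃ C : ℝ≥0∞, C ≠ ⊤ ∧ ∀ ε ∈ Set.Ioo (0 : ℝ) 1,
      nlEnergy d p (k ε) (uf ε) + nlEnergy d p (k ε) u ≤ C) :
    Tendsto (fun ε => nlForm d p (k ε) (uf ε - u) (uf ε - u)) (𝓝[>] (0 : ℝ)) (𝓝 0) ↔
    Tendsto (fun ε => nlForm d p (k ε) (uf ε) (uf ε - u) - nlForm d p (k ε) u (uf ε - u))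
      (𝓝[>] (0 : ℝ)) (𝓝 0) := by
  obtain ⟨C, hC, hbdd⟩ := hbdd
  have hε : ∀ᶠ ε in 𝓝[>] (0 : ℝ), ε ∈ Set.Ioo (0 : ℝ) 1 := Ioo_mem_nhdsGT one_pos
  exact stmt_10_general hp (hε.mono hk) (hε.mono hk0) (hε.mono huf) (.of_forall fun _ => hu)
    ⟨C, hC, hε.mono hbdd⟩
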